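/- Let F be a field, B ≤ M(n,F) a matrix space, and d a positive integer. If W ≤ F^{nd} ≅ F^n ⊗ F^d is an s′-shrunk subspace of the (d,d)-blow-up B^{(d,d)}, then there exists an s-shrunk subspace U ≤ F^n of B with sd ≥ s′ and W ⊆ U ⊗ F^d. -/

import Mathlib

/-!
Take for `U` the smallest subspace with `W ≤ U ⊗ F^d`: writing an element of `F^n ⊗ F^d` as
`∑ j, w_j ⊗ e_j`, it is the span of all the slices `w_j` of elements `w ∈ W`. For `A ∈ B` and
`t ∈ F^d`, the blow-up contains `A ⊗ (t e_jᵀ)`, which sends `w` to `A w_j ⊗ t`; hence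
`B(U) ⊗ F^d ≤ B^{(d,d)}(W)`. Comparing dimensions,
`d · dim B(U) + s' ≤ dim B^{(d,d)}(W) + s' ≤ dim W ≤ d · dim U`.
-/

open Matrix Kronecker

/-- The (k,ℓ)-blow-up of a matrix space `B ≤ M(n,F)`. -/
def blowUp {F : Type} [Field F] {n : ℕ} (B : Submodule F (Matrix (Fin n) (Fin n) F))
    (k ℓ : ℕ) : Submodule F (Matrix (Fin n × Fin k) (Fin n × Fin ℓ) F) :=
  Submodule.span F {M | ∃ A ∈ B, ∃ T : Matrix (Fin k) (Fin ℓ) F, M = A ⊗ₖ T}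

/-- `U` is an `s`-shrunk subspace of a space of matrices acting on `ι → F`. -/
def IsShrunkSubspace {F : Type} [Field F] {ι : Type} [Fintype ι]
    (B : Submodule F (Matrix ι ι F)) (U : Submodule F (ι → F)) (s : ℕ) : Prop :=
  Module.finrank F (Submodule.span F {v | ∃ A ∈ B, ∃ u ∈ U, v = A.mulVec u}) + s ≤
    Module.finrank F U

/-- The subspace `U ⊗ F^d` of `F^n ⊗ F^d ≅ F^{nd}`. -/
def tensorPow {F : Type} [Field F] {n : ℕ} (U : Submodule F (Fin n → F)) (d : ℕ) :
    Submodule F (Fin n × Fin d → F) :=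
  Submodule.span F {v | ∃ u ∈ U, ∃ w : Fin d → F, v = fun p => u p.1 * w p.2}

section Tensor

variable {R ι κ : Type*}

section CommSemiring

variable [CommSemiring R]

/-- The bilinear map `(u, t) ↦ u ⊗ t`, where `R^ι ⊗ R^κ` is modelled as `ι × κ → R`. -/
def pureTensor : (ι → R) →ₗ[R] (κ → R) →ₗ[R] (ι × κ → R) :=
  LinearMap.mk₂ R (fun u t p => u p.1 * t p.2)
    (fun _ _ _ => funext fun _ => add_mul _ _ _) (fun _ _ _ => funext fun _ => mul_assoc _ _ _)
    (fun _ _ _ => funext fun _ => mul_add _ _ _)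
    (fun _ _ _ => funext fun _ => mul_left_comm _ _ _)

@[simp]
lemma pureTensor_apply (u : ι → R) (t : κ → R) (p : ι × κ) :
    pureTensor u t p = u p.1 * t p.2 := rfl

/-- The `j`-th slice of a tensor in `R^ι ⊗ R^κ`: the vector `w_j` in `w = ∑ j, w_j ⊗ e_j`. -/
def slice (j : κ) : (ι × κ → R) →ₗ[R] (ι → R) :=
  LinearMap.funLeft R R fun i => (i, j)

@[simp]
lemma slice_apply (j : κ) (w : ι × κ → R) (i : ι) : slice j w i = w (i, j) := rfl

lemma slice_pureTensor (j : κ) (u : ι → R) (t : κ → R) :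
    slice j (pureTensor u t) = t j • u :=
  funext fun _ => mul_comm _ _

lemma sum_pureTensor_slice_single [Fintype κ] [DecidableEq κ] (w : ι × κ → R) :
    ∑ j, pureTensor (slice j w) (Pi.single j 1) = w := by
  ext p
  simp [Pi.single_apply]

variable (κ) in
/-- The submodule `U ⊗ R^κ` of `R^ι ⊗ R^κ`; for `κ = Fin d` this is `tensorPow U d`. -/
def tensorPi (U : Submodule R (ι → R)) : Submodule R (ι × κ → R) :=
  Submodule.map₂ pureTensor U ⊤

lemma mem_tensorPi_iff_forall_slice_mem [Finite κ] {U : Submodule R (ι → R)} {w : ι × κ → R} :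
    w ∈ tensorPi κ U ↔ ∀ j, slice j w ∈ U := by
  classical
  have := Fintype.ofFinite κ
  constructor
  · intro hw j
    have hle : tensorPi κ U ≤ U.comap (slice j) := Submodule.map₂_le.2 fun u hu t _ => by
      rw [Submodule.mem_comap, slice_pureTensor]
      exact U.smul_mem _ hu
    exact hle hw
  · intro hw
    rw [← sum_pureTensor_slice_single w]
    exact Submodule.sum_mem _ fun j _ => Submodule.apply_mem_map₂ _ (hw j) Submodule.mem_top

/-- The identification of `U ⊗ R^κ` with `κ`-tuples in `U`, through slices. -/
def tensorPiEquiv [Finite κ] (U : Submodule R (ι → R)) : tensorPi κ U ≃ₗ[R] (κ → U) where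
  toFun w j := ⟨slice j w.1, mem_tensorPi_iff_forall_slice_mem.1 w.2 j⟩
  invFun f := ⟨fun p => (f p.2).1 p.1, mem_tensorPi_iff_forall_slice_mem.2 fun j => (f j).2⟩
  map_add' _ _ := rfl
  map_smul' _ _ := rfl

/-- The span of all slices of elements of `W`, the least `U` with `W ≤ U ⊗ R^κ`. -/
def sliceSpan (W : Submodule R (ι × κ → R)) : Submodule R (ι → R) :=
  ⨆ j, W.map (slice j)

lemma sliceSpan_le_iff_le_tensorPi [Finite κ] {W : Submodule R (ι × κ → R)}
    {U : Submodule R (ι → R)} : sliceSpan W ≤ U ↔ W ≤ tensorPi κ U := by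
  rw [sliceSpan, iSup_le_iff]
  simp only [Submodule.map_le_iff_le_comap]
  exact ⟨fun h w hw => mem_tensorPi_iff_forall_slice_mem.2 fun j => h j hw,
    fun h j w hw => mem_tensorPi_iff_forall_slice_mem.1 (h hw) j⟩

end CommSemiring

lemma finrank_tensorPi [CommRing R] [Nontrivial R] [Fintype κ] (U : Submodule R (ι → R))
    [Module.Free R U] [Module.Finite R U] :
    Module.finrank R (tensorPi κ U) = Fintype.card κ * Module.finrank R U := by
  simp [(tensorPiEquiv (κ := κ) U).finrank_eq, Module.finrank_pi_fintype]

end Tensor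

section MatrixSpace

variable {R m n κ l : Type*} [CommSemiring R]

variable (κ l) in
/-- The space `B ⊗ M(κ × l, R)`; for `κ = Fin k` and `l = Fin ℓ` this is `blowUp B k ℓ`. -/
def matrixBlowUp (B : Submodule R (Matrix m n R)) : Submodule R (Matrix (m × κ) (n × l) R) :=
  Submodule.map₂ (kroneckerBilinear (R := R) (α := R)) B ⊤

variable [Fintype n]

/-- The image `B(U)` of a submodule `U` under a space `B` of (rectangular) matrices. -/
def matrixImage (B : Submodule R (Matrix m n R)) (U : Submodule R (n → R)) :
    Submodule R (m → R) :=
  Submodule.map₂ (mulVecBilin R R) B U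

lemma matrixImage_eq_span (B : Submodule R (Matrix m n R)) (U : Submodule R (n → R)) :
    matrixImage B U = Submodule.span R {v | ∃ A ∈ B, ∃ u ∈ U, v = A *ᵥ u} := by
  rw [matrixImage, Submodule.map₂_eq_span_image2]
  congr 1
  ext v
  simp [Set.mem_image2, eq_comm]

lemma kronecker_vecMulVec_single_mulVec [Fintype l] [DecidableEq l] (A : Matrix m n R)
    (t : κ → R) (j : l) (w : n × l → R) :
    (A ⊗ₖ vecMulVec t (Pi.single j 1)) *ᵥ w = pureTensor (A *ᵥ slice j w) t := by
  ext p
  simp only [mulVec, dotProduct, Fintype.sum_prod_type, kroneckerMap_apply, vecMulVec_apply,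
    Pi.single_apply, pureTensor_apply, slice_apply, Finset.sum_mul]
  simp [mul_right_comm]

lemma tensorPi_matrixImage_sliceSpan_le [Fintype l] (B : Submodule R (Matrix m n R))
    (W : Submodule R (n × l → R)) :
    tensorPi κ (matrixImage B (sliceSpan W)) ≤ matrixImage (matrixBlowUp κ l B) W := by
  classical
  refine Submodule.map₂_le.2 fun v hv t _ => ?_
  suffices hB : matrixImage B (sliceSpan W) ≤
      (matrixImage (matrixBlowUp κ l B) W).comap (pureTensor.flip t) from hB hv
  refine Submodule.map₂_le.2 fun A hA u hu => ?_
  suffices hU : sliceSpan W ≤ (matrixImage (matrixBlowUp κ l B) W).comap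
      (pureTensor.flip t ∘ₗ A.mulVecLin) from hU hu
  refine iSup_le fun j => Submodule.map_le_iff_le_comap.2 fun w hw => ?_
  have hmem : A ⊗ₖ vecMulVec t (Pi.single j 1) ∈ matrixBlowUp κ l B :=
    Submodule.apply_mem_map₂ (kroneckerBilinear (R := R) (α := R)) hA Submodule.mem_top
  have himage := Submodule.apply_mem_map₂ (mulVecBilin R R) hmem hw
  rwa [mulVecBilin_apply, kronecker_vecMulVec_single_mulVec] at himage

end MatrixSpace

section Coordinates

variable {F : Type} [Field F]

lemma tensorPow_eq_tensorPi {n : ℕ} (U : Submodule F (Fin n → F)) (d : ℕ) :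
    tensorPow U d = tensorPi (Fin d) U := by
  rw [tensorPi, Submodule.map₂_eq_span_image2, tensorPow]
  congr 1
  ext v
  simp [Set.mem_image2, funext_iff, eq_comm]

lemma blowUp_eq_matrixBlowUp {n : ℕ} (B : Submodule F (Matrix (Fin n) (Fin n) F)) (k ℓ : ℕ) :
    blowUp B k ℓ = matrixBlowUp (Fin k) (Fin ℓ) B := by
  rw [matrixBlowUp, Submodule.map₂_eq_span_image2, blowUp]
  congr 1
  ext M
  simp [Set.mem_image2, kroneckerBilinear, eq_comm]

lemma isShrunkSubspace_iff_finrank_matrixImage {ι : Type} [Fintype ι]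
    {B : Submodule F (Matrix ι ι F)} {U : Submodule F (ι → F)} {s : ℕ} :
    IsShrunkSubspace B U s ↔
      Module.finrank F (matrixImage B U) + s ≤ Module.finrank F U := by
  rw [matrixImage_eq_span, IsShrunkSubspace]

end Coordinates

/-- If `W` is an `s′`-shrunk subspace of the `(d,d)`-blow-up of `B`, then there is an
`s`-shrunk subspace `U` of `B` with `s·d ≥ s′` and `W ⊆ U ⊗ F^d`. -/
theorem stmt3 {F : Type} [Field F] {n : ℕ}
    (B : Submodule F (Matrix (Fin n) (Fin n) F))
    (d : ℕ) (hd : 0 < d)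
    (W : Submodule F (Fin n × Fin d → F)) (s' : ℕ)
    (hW : IsShrunkSubspace (blowUp B d d) W s') :
    ∃ (U : Submodule F (Fin n → F)) (s : ℕ),
      IsShrunkSubspace B U s ∧ s' ≤ s * d ∧ W ≤ tensorPow U d := by
  rw [isShrunkSubspace_iff_finrank_matrixImage, blowUp_eq_matrixBlowUp] at hW
  let U := sliceSpan W
  have hWU : W ≤ tensorPi (Fin d) U := sliceSpan_le_iff_le_tensorPi.1 le_rfl
  have hdomain : Module.finrank F W ≤ d * Module.finrank F U := by
    simpa [finrank_tensorPi] using Submodule.finrank_mono hWU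
  have himage : d * Module.finrank F (matrixImage B U) ≤
      Module.finrank F (matrixImage (matrixBlowUp (Fin d) (Fin d) B) W) := by
    simpa [finrank_tensorPi] using
      Submodule.finrank_mono (tensorPi_matrixImage_sliceSpan_le (κ := Fin d) B W)
  have hgap : d * Module.finrank F (matrixImage B U) + s' ≤ d * Module.finrank F U := by omega
  obtain ⟨s, hs⟩ : ∃ s, Module.finrank F U = Module.finrank F (matrixImage B U) + s :=
    Nat.exists_eq_add_of_le (Nat.le_of_mul_le_mul_left (by omega) hd)
  refine ⟨U, s, isShrunkSubspace_iff_finrank_matrixImage.2 hs.ge, ?_, ?_⟩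
  · rw [hs, mul_add] at hgap
    rw [mul_comm]
    exact Nat.le_of_add_le_add_left hgap
  · rwa [tensorPow_eq_tensorPi]
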